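/- arXiv:1404.1820 — 3 statements merged into one kernel-verified Lean document; each statement's English description precedes it below -/
import Mathlib

section
/- Let n, m be positive integers, let Q be an n×n positive definite Hermitian complex matrix, let G be an m×n complex matrix, let W be an m×m positive semidefinite Hermitian complex matrix, and let R > 0 with α = 2^R − 1. If the determinant det(Iₙ + Q⁻¹ Gᴴ W G) — which is a positive real number — satisfies det(Iₙ + Q⁻¹ Gᴴ W G) ≤ 2^R (equivalently, log₂ det(Iₙ + Q⁻¹ Gᴴ W G) ≤ R), then Gᴴ W G ⪯ α Q, i.e., α Q − Gᴴ W G is positive semidefinite. -/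
open Matrix
open scoped ComplexOrder

/-!
A matrix `A ≥ 1` has eigenvalues at least `1`, so each of them is at most their product `det A`;
hence `A ≤ (det A) • 1`. Conjugating by an invertible `S` with `Q = Sᴴ S` turns this into
`A ≤ det (Q⁻¹ A) • Q` whenever `Q ≤ A`. The proposition is the case `A = Q + Gᴴ W G`, for which
`Q⁻¹ A = 1 + Q⁻¹ Gᴴ W G`.
-/

section StarConjugation

variable {R : Type*}

theorem exists_eq_star_mul_mul_of_isUnit [Monoid R] [StarMul R] {u : R} (hu : IsUnit u) (a : R) :
    ∃ b, a = star u * b * u := by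
  obtain ⟨c, rfl⟩ := (IsUnit.isUnit_iff_mulRight_bijective.mp hu).surjective a
  obtain ⟨b, rfl⟩ := (IsUnit.isUnit_iff_mulLeft_bijective.mp hu.star).surjective c
  exact ⟨b, rfl⟩

theorem star_left_conjugate_le_conjugate_iff_of_isUnit [Ring R] [PartialOrder R] [StarRing R]
    [StarOrderedRing R] {u a b : R} (hu : IsUnit u) :
    star u * a * u ≤ star u * b * u ↔ a ≤ b := by
  rw [← sub_nonneg, ← sub_mul, ← mul_sub, hu.star_left_conjugate_nonneg_iff, sub_nonneg]

end StarConjugation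

theorem det_mul_inv_mul_mul_mul {n R : Type*} [Fintype n] [DecidableEq n] [CommRing R]
    {S T : Matrix n n R} (hT : IsUnit T) (hS : IsUnit S) (B : Matrix n n R) :
    ((T * S)⁻¹ * (T * B * S)).det = B.det := by
  have conj_eq : (T * S)⁻¹ * (T * B * S) = S⁻¹ * B * S := by
    rw [Matrix.mul_inv_rev, mul_assoc T, mul_assoc S⁻¹,
      nonsing_inv_mul_cancel_left _ _ ((isUnit_iff_isUnit_det T).mp hT), mul_assoc]
  rw [conj_eq, det_conj' hS]

section LoewnerOrder

open scoped MatrixOrder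

variable {n 𝕜 : Type*} [Fintype n] [DecidableEq n] [RCLike 𝕜] {A P : Matrix n n 𝕜}

theorem one_le_eigenvalues_of_one_le (hA : A.IsHermitian) (h : 1 ≤ A) (i : n) :
    1 ≤ hA.eigenvalues i :=
  (CFC.one_le_iff (R := ℝ) A hA).mp h _ (hA.eigenvalues_mem_spectrum_real i)

theorem le_det_smul_one_of_one_le (h : 1 ≤ A) : A ≤ A.det • 1 := by
  have hA : A.IsHermitian := (zero_le_one.trans h).posSemidef.isHermitian
  have eigenvalues_le_prod (i : n) : hA.eigenvalues i ≤ ∏ j, hA.eigenvalues j :=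
    Multiset.mem_le_prod_of_one_le (one_le_eigenvalues_of_one_le hA h) (Finset.mem_univ i)
  have prod_eq_det : algebraMap ℝ (Matrix n n 𝕜) (∏ i, hA.eigenvalues i) = A.det • 1 := by
    rw [IsScalarTower.algebraMap_apply ℝ 𝕜, Algebra.algebraMap_eq_smul_one,
      RCLike.algebraMap_eq_ofReal, RCLike.ofReal_prod, hA.det_eq_prod_eigenvalues]
  rw [← prod_eq_det, le_algebraMap_iff_spectrum_le hA, hA.spectrum_real_eq_range_eigenvalues]
  exact Set.forall_mem_range.mpr eigenvalues_le_prod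

theorem le_det_inv_mul_smul_of_le (hP : P.PosDef) (h : P ≤ A) : A ≤ (P⁻¹ * A).det • P := by
  obtain ⟨S, hS, rfl⟩ :=
    CStarAlgebra.isStrictlyPositive_iff_eq_star_mul_self.mp hP.isStrictlyPositive
  obtain ⟨B, rfl⟩ : ∃ B, A = star S * B * S := exists_eq_star_mul_mul_of_isUnit hS A
  have one_le : 1 ≤ B :=
    (star_left_conjugate_le_conjugate_iff_of_isUnit hS).mp (by rwa [mul_one])
  calc star S * B * S ≤ star S * (B.det • 1) * S :=
        star_left_conjugate_le_conjugate (le_det_smul_one_of_one_le one_le) S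
    _ = B.det • (star S * S) := by rw [mul_smul_comm, smul_mul_assoc, mul_one]
    _ = ((star S * S)⁻¹ * (star S * B * S)).det • (star S * S) := by
      rw [det_mul_inv_mul_mul_mul hS.star hS]

theorem prop1_implication_general {Q M : Matrix n n 𝕜} (hQ : Q.PosDef) (hM : M.PosSemidef)
    {r : 𝕜} (hdet : (1 + Q⁻¹ * M).det ≤ r) : ((r - 1) • Q - M).PosSemidef := by
  have det_eq : (Q⁻¹ * (Q + M)).det = (1 + Q⁻¹ * M).det := by
    rw [mul_add, nonsing_inv_mul Q ((isUnit_iff_isUnit_det Q).mp hQ.isUnit)]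
  have add_le : Q + M ≤ r • Q :=
    calc Q + M ≤ (1 + Q⁻¹ * M).det • Q :=
          det_eq ▸ le_det_inv_mul_smul_of_le hQ (le_add_of_nonneg_right hM.nonneg)
      _ ≤ r • Q := smul_le_smul_of_nonneg_right hdet hQ.posSemidef.nonneg
  rw [sub_smul, one_smul, sub_sub]
  exact add_le

end LoewnerOrder

/-- Proposition 1: the capacity constraint C2 implies the LMI constraint C̄2. -/
theorem prop1_implication {n m : ℕ} (hn : 0 < n) (hm : 0 < m)
    (Q : Matrix (Fin n) (Fin n) ℂ) (hQ : Q.PosDef)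
    (G : Matrix (Fin m) (Fin n) ℂ)
    (W : Matrix (Fin m) (Fin m) ℂ) (hW : W.PosSemidef)
    (R α : ℝ) (hR : 0 < R) (hα : α = 2 ^ R - 1)
    (hdet : (1 + Q⁻¹ * (Gᴴ * W * G)).det ≤ (((2 : ℝ) ^ R : ℝ) : ℂ)) :
    ((α : ℂ) • Q - Gᴴ * W * G).PosSemidef := by
  rw [hα, Complex.ofReal_sub, Complex.ofReal_one]
  exact prop1_implication_general hQ (hW.conjTranspose_mul_mul_same G) hdet
end

section
/- Let n, m be positive integers, let Q be an n×n positive definite Hermitian complex matrix, let G be an m×n complex matrix, let w ∈ ℂᵐ, set W = w wᴴ (a rank-at-most-one positive semidefinite Hermitian matrix), and let R > 0 with α = 2^R − 1. Then det(Iₙ + Q⁻¹ Gᴴ W G) ≤ 2^R holds if and only if Gᴴ W G ⪯ α Q, i.e., α Q − Gᴴ W G is positive semidefinite. -/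
open Matrix
open scoped ComplexOrder

/-! The matrix `Gᴴ W G` is `b bᴴ` with `b = Gᴴ w`. By the matrix determinant lemma
`det (1 + Q⁻¹ b bᴴ) = 1 + bᴴ Q⁻¹ b`, so it remains to see that `b bᴴ ⪯ α Q` exactly when
`bᴴ Q⁻¹ b ≤ α`. Put `y = Q⁻¹ b`. Cauchy–Schwarz for the inner product defined by `Q` says
`b bᴴ ⪯ (yᴴ Q y) Q`, which gives one direction; evaluating both quadratic forms at `y` gives
the other. -/

section CommRing

variable {R m n : Type*} [CommRing R]

theorem det_one_add_mul_vecMulVec [Fintype n] [DecidableEq n] (A : Matrix n n R) (u v : n → R) :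
    (1 + A * vecMulVec u v).det = 1 + v ⬝ᵥ A *ᵥ u := by
  rw [mul_vecMulVec, vecMulVec_eq Unit, det_one_add_replicateCol_mul_replicateRow]

variable [StarRing R]

theorem conjTranspose_mul_vecMulVec_self_star_mul [Fintype m] (G : Matrix m n R) (w : m → R) :
    Gᴴ * vecMulVec w (star w) * G = vecMulVec (Gᴴ *ᵥ w) (star (Gᴴ *ᵥ w)) := by
  rw [mul_vecMulVec, vecMulVec_mul, star_mulVec, conjTranspose_conjTranspose]

variable [Fintype n] {Q : Matrix n n R}

theorem star_mulVec_dotProduct_of_isHermitian (hQ : Q.IsHermitian) (x y : n → R) :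
    star (Q *ᵥ x) ⬝ᵥ y = star x ⬝ᵥ Q *ᵥ y := by
  rw [star_mulVec, hQ.eq, dotProduct_mulVec]

theorem isSelfAdjoint_star_dotProduct_mulVec (hQ : Q.IsHermitian) (y : n → R) :
    IsSelfAdjoint (star y ⬝ᵥ Q *ᵥ y) := by
  rw [isSelfAdjoint_iff, ← star_dotProduct, star_mulVec_dotProduct_of_isHermitian hQ]

theorem conjTranspose_mul_mul_eq_smul_sub_vecMulVec [DecidableEq n] {C : Matrix n n R}
    (hQ : Q.IsHermitian) {y : n → R}
    (hC : C = (star y ⬝ᵥ Q *ᵥ y) • 1 - vecMulVec y (star (Q *ᵥ y))) :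
    Cᴴ * Q * C =
      (star y ⬝ᵥ Q *ᵥ y) •
        ((star y ⬝ᵥ Q *ᵥ y) • Q - vecMulVec (Q *ᵥ y) (star (Q *ᵥ y))) := by
  have hQC : Q * C = (star y ⬝ᵥ Q *ᵥ y) • Q - vecMulVec (Q *ᵥ y) (star (Q *ᵥ y)) := by
    rw [hC, mul_sub, mul_smul_comm, mul_one, mul_vecMulVec]
  have hCstar : Cᴴ = (star y ⬝ᵥ Q *ᵥ y) • 1 - vecMulVec (Q *ᵥ y) (star y) := by
    rw [hC, conjTranspose_sub, conjTranspose_smul, conjTranspose_one, conjTranspose_vecMulVec,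
      star_star, (isSelfAdjoint_star_dotProduct_mulVec hQ y).star_eq]
  -- `C` is a multiple of the `Q`-orthogonal projection along `y`.
  have horth : vecMulVec (Q *ᵥ y) (star y) * (Q * C) = 0 := by
    rw [hQC, mul_sub, vecMulVec_mul_vecMulVec, mul_smul_comm, vecMulVec_mul, star_mulVec, hQ.eq,
      vecMulVec_smul, sub_self]
  rw [mul_assoc, hCstar, sub_mul, horth, sub_zero, hQC, smul_mul_assoc, one_mul]

end CommRing

section Field

variable {K m n : Type*} [Field K] [PartialOrder K] [StarRing K] [StarOrderedRing K]

theorem inv_nonneg_of_starOrderedRing {c : K} (hc : 0 ≤ c) : 0 ≤ c⁻¹ :=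
  calc
    0 ≤ star c⁻¹ * c * c⁻¹ := star_left_conjugate_nonneg hc c⁻¹
    _ = c⁻¹ * c⁻¹⁻¹ * c⁻¹ := by rw [star_inv₀, (IsSelfAdjoint.of_nonneg hc).star_eq, inv_inv]
    _ = c⁻¹ := mul_inv_mul_cancel c⁻¹

theorem nonneg_of_mul_nonneg_of_starOrderedRing {a c : K} (h : 0 ≤ a * c) (hc : 0 < c) :
    0 ≤ a := by
  simpa only [mul_inv_cancel_right₀ hc.ne'] using
    mul_nonneg h (inv_nonneg_of_starOrderedRing hc.le)

variable {Q : Matrix n n K}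

theorem nonneg_of_posSemidef_smul [Nonempty n] (hQ : Q.PosDef) {α : K}
    (h : (α • Q).PosSemidef) : 0 ≤ α :=
  nonneg_of_mul_nonneg_of_starOrderedRing h.diag_nonneg (hQ.diag_pos (i := Classical.arbitrary n))

variable [Fintype n]

theorem posSemidef_dotProduct_smul_sub_vecMulVec (hQ : Q.PosDef) (y : n → K) :
    ((star y ⬝ᵥ Q *ᵥ y) • Q - vecMulVec (Q *ᵥ y) (star (Q *ᵥ y))).PosSemidef := by
  classical
  obtain rfl | hy := eq_or_ne y 0
  · simpa using PosSemidef.zero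
  have hs := hQ.dotProduct_mulVec_pos hy
  have hscaled := hQ.posSemidef.conjTranspose_mul_mul_same
    ((star y ⬝ᵥ Q *ᵥ y) • 1 - vecMulVec y (star (Q *ᵥ y)))
  rw [conjTranspose_mul_mul_eq_smul_sub_vecMulVec hQ.isHermitian rfl] at hscaled
  simpa only [inv_smul_smul₀ hs.ne'] using hscaled.smul (inv_nonneg_of_starOrderedRing hs.le)

theorem dotProduct_mulVec_le_of_posSemidef_smul_sub_vecMulVec [Nonempty n] (hQ : Q.PosDef)
    {y : n → K} {α : K} (h : (α • Q - vecMulVec (Q *ᵥ y) (star (Q *ᵥ y))).PosSemidef) :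
    star y ⬝ᵥ Q *ᵥ y ≤ α := by
  obtain rfl | hy := eq_or_ne y 0
  · simp only [mulVec_zero, zero_vecMulVec, sub_zero, dotProduct_zero] at h ⊢
    exact nonneg_of_posSemidef_smul hQ h
  have hform := h.dotProduct_mulVec_nonneg y
  rw [sub_mulVec, smul_mulVec, vecMulVec_mulVec, op_smul_eq_smul,
    star_mulVec_dotProduct_of_isHermitian hQ.isHermitian, ← sub_smul, dotProduct_smul,
    smul_eq_mul] at hform
  exact sub_nonneg.1 <|
    nonneg_of_mul_nonneg_of_starOrderedRing hform (hQ.dotProduct_mulVec_pos hy)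

theorem posSemidef_smul_sub_vecMulVec_iff [DecidableEq n] [Nonempty n] (hQ : Q.PosDef)
    (b : n → K) (α : K) :
    (α • Q - vecMulVec b (star b)).PosSemidef ↔ star b ⬝ᵥ Q⁻¹ *ᵥ b ≤ α := by
  obtain ⟨y, rfl⟩ := mulVec_surjective_iff_isUnit.2 hQ.isUnit b
  have hdet := (isUnit_iff_isUnit_det Q).1 hQ.isUnit
  rw [mulVec_mulVec, nonsing_inv_mul Q hdet, one_mulVec,
    star_mulVec_dotProduct_of_isHermitian hQ.isHermitian]
  refine ⟨dotProduct_mulVec_le_of_posSemidef_smul_sub_vecMulVec hQ, fun h ↦ ?_⟩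
  have hsum := (hQ.posSemidef.smul (sub_nonneg.2 h)).add
    (posSemidef_dotProduct_smul_sub_vecMulVec hQ y)
  rwa [sub_smul, sub_add_sub_cancel] at hsum

theorem prop1_equivalence_general [Fintype m] [DecidableEq n] [Nonempty n] (hQ : Q.PosDef)
    (G : Matrix m n K) (w : m → K) (α : K) :
    (1 + Q⁻¹ * (Gᴴ * vecMulVec w (star w) * G)).det ≤ 1 + α ↔
      (α • Q - Gᴴ * vecMulVec w (star w) * G).PosSemidef := by
  rw [conjTranspose_mul_vecMulVec_self_star_mul, det_one_add_mul_vecMulVec,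
    add_le_add_iff_left, posSemidef_smul_sub_vecMulVec_iff hQ]

end Field

/-- Equivalence part of Proposition 1: for a rank-one `W = w wᴴ`,
constraints C2 and C̄2 are equivalent. -/
theorem prop1_equivalence {n m : ℕ} (hn : 0 < n) (hm : 0 < m)
    (Q : Matrix (Fin n) (Fin n) ℂ) (hQ : Q.PosDef)
    (G : Matrix (Fin m) (Fin n) ℂ)
    (w : Fin m → ℂ)
    (R α : ℝ) (hR : 0 < R) (hα : α = 2 ^ R - 1) :
    (1 + Q⁻¹ * (Gᴴ * vecMulVec w (star w) * G)).det ≤ (((2 : ℝ) ^ R : ℝ) : ℂ) ↔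
      ((α : ℂ) • Q - Gᴴ * vecMulVec w (star w) * G).PosSemidef := by
  have : Nonempty (Fin n) := Fin.pos_iff_nonempty.1 hn
  rw [← prop1_equivalence_general hQ, hα, Complex.ofReal_sub, Complex.ofReal_one, add_sub_cancel]
end

section
/- For an n×n positive semidefinite Hermitian complex matrix A, equality det(I + A) = 1 + Tr(A) holds if and only if rank(A) ≤ 1. -/
open Matrix
open scoped ComplexOrder

/-!
If `λ₁, …, λₙ ≥ 0` are the eigenvalues of `A`, expanding `det (1 + A) = ∏ (1 + λᵢ)` over subsets
of the indices gives `1 + Tr A` plus the products of two or more distinct eigenvalues. All these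
products are nonnegative, so equality means that each of them vanishes, i.e. that at most one
eigenvalue is nonzero.
-/

section ProdOneAdd

variable {ι R : Type*}

theorem prod_one_add_eq_one_add_sum_add [CommSemiring R] (s : Finset ι) (f : ι → R) :
    ∏ i ∈ s, (1 + f i) =
      1 + ∑ i ∈ s, f i + ∑ t ∈ s.powerset with 1 < t.card, ∏ i ∈ t, f i := by
  classical
  have small_subsets : {t ∈ s.powerset | ¬1 < t.card} =
      insert ∅ (s.map ⟨singleton, Finset.singleton_injective⟩) := by
    ext t
    rw [← Finset.powersetCard_one, Finset.mem_filter, Finset.mem_powerset, Finset.mem_insert,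
      Finset.mem_powersetCard, not_lt, Nat.le_one_iff_eq_zero_or_eq_one, Finset.card_eq_zero]
    grind
  rw [Finset.prod_one_add, ← Finset.sum_filter_not_add_sum_filter _ (fun t ↦ 1 < t.card),
    small_subsets, Finset.sum_insert (by simp), Finset.prod_empty, Finset.sum_map]
  simp only [Function.Embedding.coeFn_mk, Finset.prod_singleton]

variable {s : Finset ι} {f : ι → R}

theorem forall_prod_eq_zero_iff_card_filter_ne_zero_le_one [CommMonoidWithZero R] [PartialOrder R]
    [PosMulStrictMono R] [ZeroLEOneClass R] [Nontrivial R] [DecidablePred (f · ≠ 0)]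
    (hf : ∀ i ∈ s, 0 ≤ f i) :
    (∀ t ⊆ s, 1 < t.card → ∏ i ∈ t, f i = 0) ↔ {i ∈ s | f i ≠ 0}.card ≤ 1 := by
  constructor
  · intro h
    by_contra! two_nonzero
    have prod_pos : 0 < ∏ i ∈ s with f i ≠ 0, f i := Finset.prod_pos fun i hi ↦
      have ⟨his, hi0⟩ := Finset.mem_filter.mp hi
      (hf i his).lt_of_ne' hi0
    exact prod_pos.ne' (h _ (Finset.filter_subset _ s) two_nonzero)
  · intro h t hts ht
    obtain ⟨i, hit, hi⟩ : ∃ i ∈ t, f i = 0 := by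
      by_contra! all_ne_zero
      have t_sub : t ⊆ {i ∈ s | f i ≠ 0} := fun i hi ↦
        Finset.mem_filter.mpr ⟨hts hi, all_ne_zero i hi⟩
      exact ht.not_ge ((Finset.card_le_card t_sub).trans h)
    exact Finset.prod_eq_zero hit hi

theorem prod_one_add_eq_one_add_sum_iff [CommSemiring R] [PartialOrder R] [IsStrictOrderedRing R]
    [DecidablePred (f · ≠ 0)] (hf : ∀ i ∈ s, 0 ≤ f i) :
    ∏ i ∈ s, (1 + f i) = 1 + ∑ i ∈ s, f i ↔ {i ∈ s | f i ≠ 0}.card ≤ 1 := by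
  have prod_nonneg : ∀ t ∈ s.powerset.filter (1 < ·.card), 0 ≤ ∏ i ∈ t, f i := fun t ht ↦
    Finset.prod_nonneg fun i hi ↦ hf i (Finset.mem_powerset.mp (Finset.mem_filter.mp ht).1 hi)
  rw [prod_one_add_eq_one_add_sum_add, add_eq_left,
    Finset.sum_eq_zero_iff_of_nonneg prod_nonneg,
    ← forall_prod_eq_zero_iff_card_filter_ne_zero_le_one hf]
  simp only [Finset.mem_filter, Finset.mem_powerset, and_imp]

end ProdOneAdd

section RCLike

variable {𝕜 m : Type*} [RCLike 𝕜] [Fintype m] [DecidableEq m] {A : Matrix m m 𝕜}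

theorem det_one_add_eq_prod_one_add_eigenvalues (hA : A.IsHermitian) :
    (1 + A).det = ∏ i, (1 + (hA.eigenvalues i : 𝕜)) := by
  have one_add_eq : 1 + A = Unitary.conjStarAlgAut 𝕜 _ hA.eigenvectorUnitary
      (diagonal fun i ↦ 1 + (hA.eigenvalues i : 𝕜)) := by
    conv_lhs => rw [hA.spectral_theorem, ← map_one (Unitary.conjStarAlgAut 𝕜 _ _), ← map_add,
      ← diagonal_one, diagonal_add]
    rfl
  rw [one_add_eq, det_map, det_diagonal]

theorem det_one_add_eq_one_add_trace_iff_general (hA : A.PosSemidef) :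
    (1 + A).det = 1 + A.trace ↔ A.rank ≤ 1 := by
  have hH := hA.isHermitian
  have eigenvalues_nonneg : ∀ i ∈ Finset.univ, 0 ≤ (hH.eigenvalues i : 𝕜) := fun i _ ↦
    RCLike.ofReal_nonneg.mpr (hA.eigenvalues_nonneg i)
  rw [det_one_add_eq_prod_one_add_eigenvalues hH, hH.trace_eq_sum_eigenvalues,
    hH.rank_eq_card_non_zero_eigs, Fintype.card_subtype]
  classical
  rw [prod_one_add_eq_one_add_sum_iff eigenvalues_nonneg]
  simp only [ne_eq, RCLike.ofReal_eq_zero]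

end RCLike

/-- Lemma 1 (equality characterization): for `A ⪰ 0`,
`det (I + A) = 1 + Tr A` iff `rank A ≤ 1`. -/
theorem det_one_add_eq_one_add_trace_iff {n : ℕ}
    (A : Matrix (Fin n) (Fin n) ℂ) (hA : A.PosSemidef) :
    (1 + A).det = (1 : ℂ) + A.trace ↔ A.rank ≤ 1 :=
  det_one_add_eq_one_add_trace_iff_general hA
end
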